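/- Let K be a semidualizing R-module and let c_1 and c_2 be two G_K-Gorenstein ideals of R. Assume M_1, M, M_2 are R-modules such that M_1 is linked to M by c_1 and M is linked to M_2 by c_2, and let n denote the common value of grade(c_1) and grade(c_2). Then Ext^i_R(M_1, K) ≅ Ext^i_R(M_2, K) for all i > n. -/

import Mathlib

open CategoryTheory

noncomputable section

universe u

/-- The `i`-th Ext group `Ext^i_R(M,N)`, as a type (with its `R`-module structure). -/
abbrev extM (R : Type u) [CommRing R] (i : ℕ) (M N : Type u) [AddCommGroup M] [Module R M]
    [AddCommGroup N] [Module R N] : Type u :=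
  ((Ext R (ModuleCat.{u} R) i).obj (Opposite.op (ModuleCat.of R M))).obj (ModuleCat.of R N)

/-- The `i`-th Tor group `Tor^R_i(M,N)`, as a type. -/
abbrev torM (R : Type u) [CommRing R] (i : ℕ) (M N : Type u) [AddCommGroup M] [Module R M]
    [AddCommGroup N] [Module R N] : Type u :=
  ((Tor (ModuleCat.{u} R) i).obj (ModuleCat.of R M)).obj (ModuleCat.of R N)

/-- The `i`-th local cohomology `H^i_I(M)`, as a type. -/
abbrev locCoh (R : Type u) [CommRing R] (I : Ideal R) (i : ℕ) (M : Type u) [AddCommGroup M]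
    [Module R M] : Type u :=
  (localCohomology I i).obj (ModuleCat.of R M)

/-- A submodule `N ≤ M` is superfluous if `K ⊔ N = ⊤` implies `K = ⊤`. -/
def Submodule.IsSuperfluous {R M : Type u} [CommRing R] [AddCommGroup M] [Module R M]
    (N : Submodule R M) : Prop :=
  ∀ K : Submodule R M, K ⊔ N = ⊤ → K = ⊤

/-- A minimal projective resolution of `M` by finitely generated projective modules:
each `P i → Ω^i M` is a projective cover (i.e. has superfluous kernel). -/
structure MinRes (R : Type u) [CommRing R] (M : Type u) [AddCommGroup M] [Module R M] where
  P : ℕ → ModuleCat.{u} R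
  projective : ∀ i, Module.Projective R (P i)
  finite : ∀ i, Module.Finite R (P i)
  d : (i : ℕ) → (↥(P (i + 1)) →ₗ[R] ↥(P i))
  ε : ↥(P 0) →ₗ[R] M
  surj : Function.Surjective ε
  exact0 : LinearMap.range (d 0) = LinearMap.ker ε
  exact : ∀ i, LinearMap.range (d (i + 1)) = LinearMap.ker (d i)
  min_eps : (LinearMap.ker ε).IsSuperfluous
  min_d : ∀ i, (LinearMap.ker (d i)).IsSuperfluous

namespace MinRes

variable {R M : Type u} [CommRing R] [AddCommGroup M] [Module R M]

/-- `T k F` is the Auslander-Bridger transpose `𝒯_{k+1} M = Tr Ω^k M`, computed as the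
cokernel of `P_k* → P_{k+1}*`. -/
def T (F : MinRes R M) (k : ℕ) : Type u :=
  (Module.Dual R ↥(F.P (k + 1))) ⧸ LinearMap.range (F.d k).dualMap

instance (F : MinRes R M) (k : ℕ) : AddCommGroup (F.T k) :=
  inferInstanceAs (AddCommGroup ((Module.Dual R ↥(F.P (k + 1))) ⧸
    LinearMap.range (F.d k).dualMap))

instance (F : MinRes R M) (k : ℕ) : Module R (F.T k) :=
  inferInstanceAs (Module R ((Module.Dual R ↥(F.P (k + 1))) ⧸
    LinearMap.range (F.d k).dualMap))

/-- The transpose `Tr M = coker(P₀* → P₁*)` computed from a minimal projective presentation. -/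
abbrev Tr (F : MinRes R M) : Type u := F.T 0

/-- `λM = ΩTr M`, realized as the image of `P₀* → P₁*` for a minimal projective
presentation `P₁ → P₀ → M → 0`. -/
def lambdaMod (F : MinRes R M) : Type u :=
  ↥(LinearMap.range (F.d 0).dualMap)

instance (F : MinRes R M) : AddCommGroup F.lambdaMod :=
  inferInstanceAs (AddCommGroup ↥(LinearMap.range (F.d 0).dualMap))

instance (F : MinRes R M) : Module R F.lambdaMod :=
  inferInstanceAs (Module R ↥(LinearMap.range (F.d 0).dualMap))

end MinRes

/-- `M` is a horizontally linked `R`-module, i.e. `M ≅ λλM`. -/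
def IsHorizontallyLinked (R : Type u) [CommRing R] (M : Type u) [AddCommGroup M]
    [Module R M] : Prop :=
  ∃ (F : MinRes R M) (G : MinRes R F.lambdaMod), Nonempty (G.lambdaMod ≃ₗ[R] M)

/-- `M` and `N` are horizontally linked to each other: `M ≅ λN` and `N ≅ λM`. -/
def MutuallyLinked (A : Type u) [CommRing A] (M N : Type u) [AddCommGroup M] [Module A M]
    [AddCommGroup N] [Module A N] : Prop :=
  ∃ (F : MinRes A M) (G : MinRes A N),
    Nonempty (F.lambdaMod ≃ₗ[A] N) ∧ Nonempty (G.lambdaMod ≃ₗ[A] M)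

/-- `M` is linked to `N` by the ideal `c`: `c` annihilates both modules and they are
horizontally linked to each other as `R ⧸ c`-modules. -/
def LinkedBy (R : Type u) [CommRing R] (c : Ideal R) (M N : Type u) [AddCommGroup M]
    [Module R M] [AddCommGroup N] [Module R N] : Prop :=
  ∃ (hM : Module.IsTorsionBySet R M c) (hN : Module.IsTorsionBySet R N c),
    letI := hM.module
    letI := hN.module
    MutuallyLinked (R ⧸ c) M N

/-- A stable module: no nonzero projective direct summand. -/
def IsStableModule (R : Type u) [CommRing R] (M : Type u) [AddCommGroup M] [Module R M] : Prop :=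
  ∀ N : Submodule R M, Module.Projective R ↥N → (∃ N' : Submodule R M, IsCompl N N') → N = ⊥

/-- `M` has G-dimension zero: `M` is finitely generated and reflexive,
and `Ext^i(M,R) = 0 = Ext^i(M*,R)` for all `i > 0`. -/
def IsGDimZero (R : Type u) [CommRing R] (M : Type u) [AddCommGroup M] [Module R M] : Prop :=
  Module.Finite R M ∧ Function.Bijective (Module.Dual.eval R M) ∧
    (∀ i : ℕ, 0 < i → Subsingleton (extM R i M R)) ∧
    (∀ i : ℕ, 0 < i → Subsingleton (extM R i (Module.Dual R M) R))

/-- `M` admits a resolution of length `≤ n` by modules of G-dimension zero. -/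
def GDimLE (R : Type u) [CommRing R] : ℕ → ModuleCat.{u} R → Prop
  | 0, M => IsGDimZero R ↥M
  | n + 1, M =>
    ∃ (G : ModuleCat.{u} R) (f : ↥G →ₗ[R] ↥M), IsGDimZero R ↥G ∧ Function.Surjective f ∧
      GDimLE R n (ModuleCat.of R ↥(LinearMap.ker f))

/-- The G-dimension of `M`: the minimal length of a resolution of `M` by modules of
G-dimension zero (`∞` if there is none). -/
def GDim (R : Type u) [CommRing R] (M : Type u) [AddCommGroup M] [Module R M] : ℕ∞ :=
  sInf {n : ℕ∞ | ∃ k : ℕ, n = k ∧ GDimLE R k (ModuleCat.of R M)}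

/-- The reduced grade of `M`: `rgr M = inf{ i > 0 | Ext^i(M,R) ≠ 0 }`. -/
def rgr (R : Type u) [CommRing R] (M : Type u) [AddCommGroup M] [Module R M] : ℕ∞ :=
  sInf {n : ℕ∞ | ∃ k : ℕ, n = k ∧ 0 < k ∧ ¬ Subsingleton (extM R k M R)}

/-- The grade of `M`: `gr M = inf{ i ≥ 0 | Ext^i(M,R) ≠ 0 }`. -/
def egrade (R : Type u) [CommRing R] (M : Type u) [AddCommGroup M] [Module R M] : ℕ∞ :=
  sInf {n : ℕ∞ | ∃ k : ℕ, n = k ∧ ¬ Subsingleton (extM R k M R)}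

/-- `depth_I(M) = inf{ i | Ext^i(R/I, M) ≠ 0 }`; for `I` the maximal ideal of a
local ring this is the depth of `M`. -/
def edepth (R : Type u) [CommRing R] (I : Ideal R) (M : Type u) [AddCommGroup M]
    [Module R M] : ℕ∞ :=
  sInf {n : ℕ∞ | ∃ k : ℕ, n = k ∧ ¬ Subsingleton (extM R k (R ⧸ I) M)}

/-- The depth of the local ring `R`. -/
def rdepth (R : Type u) [CommRing R] [IsLocalRing R] : ℕ∞ :=
  edepth R (IsLocalRing.maximalIdeal R) R

/-- `depth_{R_p}(M_p)`. -/
def locDepth (R : Type u) [CommRing R] (p : Ideal R) [p.IsPrime] (M : Type u) [AddCommGroup M]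
    [Module R M] : ℕ∞ :=
  edepth (Localization.AtPrime p) (IsLocalRing.maximalIdeal (Localization.AtPrime p))
    (LocalizedModule p.primeCompl M)

/-- `depth R_p`. -/
def locRingDepth (R : Type u) [CommRing R] (p : Ideal R) [p.IsPrime] : ℕ∞ :=
  rdepth (Localization.AtPrime p)

/-- `Gdim_{R_p}(M_p)`. -/
def locGDim (R : Type u) [CommRing R] (p : Ideal R) [p.IsPrime] (M : Type u) [AddCommGroup M]
    [Module R M] : ℕ∞ :=
  GDim (Localization.AtPrime p) (LocalizedModule p.primeCompl M)

/-- `rgr_{R_p}(M_p)`. -/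
def locRgr (R : Type u) [CommRing R] (p : Ideal R) [p.IsPrime] (M : Type u) [AddCommGroup M]
    [Module R M] : ℕ∞ :=
  rgr (Localization.AtPrime p) (LocalizedModule p.primeCompl M)

/-- `dim_{R_p}(M_p)`, the Krull dimension of the support of `M_p` over `R_p`. -/
def locDim (R : Type u) [CommRing R] (p : Ideal R) [p.IsPrime] (M : Type u) [AddCommGroup M]
    [Module R M] : WithBot ℕ∞ :=
  ringKrullDim ((Localization.AtPrime p) ⧸
    Module.annihilator (Localization.AtPrime p) (LocalizedModule p.primeCompl M))

/-- `M` satisfies the condition `S̃_k`: `depth_{R_p}(M_p) ≥ min{k, depth R_p}` for all primes. -/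
def Stilde (R : Type u) [CommRing R] (k : ℕ) (M : Type u) [AddCommGroup M] [Module R M] : Prop :=
  ∀ (p : Ideal R) (_ : p.IsPrime), min (k : ℕ∞) (locRingDepth R p) ≤ locDepth R p M

/-- `M` satisfies Serre's condition `(S_k)`:
`depth_{R_p}(M_p) ≥ min{k, dim_{R_p}(M_p)}` for all primes. -/
def SerreS (R : Type u) [CommRing R] (k : ℕ) (M : Type u) [AddCommGroup M] [Module R M] : Prop :=
  ∀ (p : Ideal R) (_ : p.IsPrime),
    min (k : WithBot ℕ∞) (locDim R p M) ≤ (locDepth R p M : WithBot ℕ∞)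

/-- `M` is a `k`-th syzygy module. -/
def IsKthSyzygy (R : Type u) [CommRing R] : ℕ → ModuleCat.{u} R → Prop
  | 0, _ => True
  | k + 1, M =>
    ∃ (P : ModuleCat.{u} R) (f : ↥M →ₗ[R] ↥P), Module.Projective R ↥P ∧ Module.Finite R ↥P ∧
      Function.Injective f ∧ IsKthSyzygy R k (ModuleCat.of R (↥P ⧸ LinearMap.range f))

/-- The `I`-torsion submodule `Γ_I(M) = { x | I^n x = 0 for some n }`. -/
def gammaTorsion (R : Type u) [CommRing R] (I : Ideal R) (M : Type u) [AddCommGroup M]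
    [Module R M] : Submodule R M where
  carrier := {x | ∃ n : ℕ, ∀ a ∈ I ^ n, a • x = 0}
  zero_mem' := ⟨0, fun a _ => smul_zero a⟩
  add_mem' := by
    rintro x y ⟨n, hn⟩ ⟨m, hm⟩
    exact ⟨n + m, fun a ha => by
      rw [smul_add, hn a (Ideal.pow_le_pow_right (Nat.le_add_right n m) ha),
        hm a (Ideal.pow_le_pow_right (Nat.le_add_left m n) ha), add_zero]⟩
  smul_mem' := by
    rintro c x ⟨n, hn⟩
    exact ⟨n, fun a ha => by rw [smul_comm, hn a ha, smul_zero]⟩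

/-- `N` has finite flat dimension (characterized by uniform vanishing of `Tor`). -/
def HasFiniteFlatDim (R : Type u) [CommRing R] (N : Type u) [AddCommGroup N] [Module R N] : Prop :=
  ∃ n : ℕ, ∀ i : ℕ, n < i → ∀ (M : ModuleCat.{u} R), Subsingleton (torM R i ↥M N)

/-- `N` has finite injective dimension (characterized by uniform vanishing of `Ext`). -/
def HasFiniteInjDim (R : Type u) [CommRing R] (N : Type u) [AddCommGroup N] [Module R N] : Prop :=
  ∃ n : ℕ, ∀ i : ℕ, n < i → ∀ (M : ModuleCat.{u} R), Subsingleton (extM R i ↥M N)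

/-- `K` is a semidualizing `R`-module. -/
def IsSemidualizing (R : Type u) [CommRing R] (K : Type u) [AddCommGroup K] [Module R K] : Prop :=
  Module.Finite R K ∧ Function.Bijective (LinearMap.lsmul R K) ∧
    ∀ i : ℕ, 0 < i → Subsingleton (extM R i K K)

/-- The biduality map `M → Hom(Hom(M,K),K)`. -/
def evalK (R : Type u) [CommRing R] (K M : Type u) [AddCommGroup K] [Module R K]
    [AddCommGroup M] [Module R M] : M →ₗ[R] ((M →ₗ[R] K) →ₗ[R] K) :=
  LinearMap.applyₗ

/-- `M` has `G_K`-dimension zero. -/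
def IsGKDimZero (R : Type u) [CommRing R] (K M : Type u) [AddCommGroup K] [Module R K]
    [AddCommGroup M] [Module R M] : Prop :=
  Module.Finite R M ∧ Function.Bijective (evalK R K M) ∧
    (∀ i : ℕ, 0 < i → Subsingleton (extM R i M K)) ∧
    (∀ i : ℕ, 0 < i → Subsingleton (extM R i (M →ₗ[R] K) K))

/-- `M` admits a resolution of length `≤ n` by modules of `G_K`-dimension zero. -/
def GKDimLE (R : Type u) [CommRing R] (K : Type u) [AddCommGroup K] [Module R K] :
    ℕ → ModuleCat.{u} R → Prop
  | 0, M => IsGKDimZero R K ↥M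
  | n + 1, M =>
    ∃ (G : ModuleCat.{u} R) (f : ↥G →ₗ[R] ↥M), IsGKDimZero R K ↥G ∧ Function.Surjective f ∧
      GKDimLE R K n (ModuleCat.of R ↥(LinearMap.ker f))

/-- The `G_K`-dimension of `M`. -/
def GKDim (R : Type u) [CommRing R] (K M : Type u) [AddCommGroup K] [Module R K]
    [AddCommGroup M] [Module R M] : ℕ∞ :=
  sInf {n : ℕ∞ | ∃ k : ℕ, n = k ∧ GKDimLE R K k (ModuleCat.of R M)}

/-- The grade of a module, `gr_R(M) = grade(Ann_R(M), R) = inf{i | Ext^i(R/Ann M, R) ≠ 0}`. -/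
def grAnn (R : Type u) [CommRing R] (M : Type u) [AddCommGroup M] [Module R M] : ℕ∞ :=
  egrade R (R ⧸ Module.annihilator R M)

/-- The grade of an ideal, `grade(I) = inf{i | Ext^i(R/I, R) ≠ 0}`. -/
def gradeI (R : Type u) [CommRing R] (I : Ideal R) : ℕ∞ :=
  egrade R (R ⧸ I)

/-- The ideal `I` is `G_K`-Gorenstein: `R/I` is `G_K`-perfect and `Ext^{gr I}(R/I, K)` is
cyclic. -/
def IsGKGorensteinIdeal (R : Type u) [CommRing R] (K : Type u) [AddCommGroup K] [Module R K]
    (I : Ideal R) : Prop :=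
  ∃ n : ℕ, grAnn R (R ⧸ I) = (n : ℕ∞) ∧ GKDim R K (R ⧸ I) = (n : ℕ∞) ∧
    ∃ x : extM R n (R ⧸ I) K, Submodule.span R {x} = ⊤

end

/-!
Let `n` be the common grade of `c₁` and `c₂`. Iterated embeddings into injective modules without
`c₁c₂`-torsion replace `K` by an `n`-th cosyzygy `E` with `Ext^{n+i}(N, K) = Ext^i(N, E)` for every
`N` killed by `c₁c₂`. Since `c_j` is `G_K`-Gorenstein, `Ext^n(R/c_j, K)` is cyclic with annihilator
`c_j`, so `Hom(R/c_j, E) ≅ R/c_j` and `Hom(-, E)` is the `R/c_j`-dual on modules killed by `c_j`.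
Linkage by `c_j` therefore gives an exact sequence `0 → Hom(M, E) → Hom(P, E) → M_j → 0` with `P`
finite projective over `R/c_j`. It identifies `Ext^1(M_j, E)` with the cokernel of
`M → Hom(Hom(M, E), E)` and `Ext^{i+1}(M_j, E)`, for `i > 0`, with `Ext^i(Hom(M, E), E)`;
neither depends on `j`.
-/

universe u

section ExtComparison

lemma extMk_zero_eq_zero_iff {C : Type*} [Category* C] [Abelian C] [HasExt C] {X Y : C}
    (P : ProjectiveResolution X) (f : P.complex.X 0 ⟶ Y) (hf : P.complex.d 1 0 ≫ f = 0) :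
    P.extMk f 1 rfl hf = 0 ↔ f = 0 := by
  refine ⟨fun h ↦ ?_, fun h ↦ by subst h; simp⟩
  rw [← P.extEquivCohomologyClass.apply_eq_iff_eq,
    ProjectiveResolution.extEquivCohomologyClass_extMk,
    ProjectiveResolution.extEquivCohomologyClass_zero,
    CochainComplex.HomComplex.CohomologyClass.mk_eq_zero_iff,
    CochainComplex.HomComplex.Cocycle.toSingleMk_mem_coboundaries_iff _ _ _ _ _ 1 (by simp)] at h
  obtain ⟨g, hg⟩ := h
  have hX : Limits.IsZero (P.cochainComplex.X 1) :=
    CochainComplex.isZero_of_isStrictlyLE _ 0 1 (by simp)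
  obtain rfl : g = 0 := hX.eq_of_src _ _
  rw [← cancel_epi (P.cochainComplexXIso (-0) 0 rfl).hom]
  simpa using hg.symm

lemma nonempty_homology_linearEquiv {R : Type u} [CommRing R] (S : ShortComplex (ModuleCat.{u} R))
    {E : Type u} [AddCommGroup E] [Module R E] (φ : LinearMap.ker S.g.hom →ₗ[R] E)
    (hφ : Function.Surjective φ) (hker : ∀ x, φ x = 0 ↔ x.1 ∈ LinearMap.range S.f.hom) :
    Nonempty (S.homology ≃ₗ[R] E) := by
  have hrange : LinearMap.range S.moduleCatToCycles = LinearMap.ker φ := by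
    ext x
    rw [LinearMap.mem_ker, hker]
    exact exists_congr fun y ↦ Subtype.ext_iff
  exact ⟨S.moduleCatHomologyIso.toLinearEquiv ≪≫ₗ Submodule.quotEquivOfEq _ _ hrange ≪≫ₗ
    φ.quotKerEquivOfSurjective hφ⟩

variable {R : Type u} [CommRing R]

/-- The map sending an `i`-cocycle of `Hom(P, Y)`, for `P` a projective resolution of `X`, to its
class in Mathlib's `Abelian.Ext X Y i`. -/
noncomputable def cocycleToExt {X : ModuleCat.{u} R} (P : ProjectiveResolution X)
    (Y : ModuleCat.{u} R) (i : ℕ) :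
    LinearMap.ker ((P.complex.linearYonedaObj R Y).d i (i + 1)).hom →ₗ[R] Abelian.Ext X Y i where
  toFun f := P.extMk (show P.complex.X i ⟶ Y from f.1) (i + 1) rfl f.2
  map_add' f g := (P.add_extMk (show P.complex.X i ⟶ Y from f.1)
    (show P.complex.X i ⟶ Y from g.1) (i + 1) rfl f.2 g.2).symm
  map_smul' r f := by
    have hcomp := P.extMk_comp_mk₀ (show P.complex.X i ⟶ Y from f.1) (i + 1) rfl f.2 (r • 𝟙 Y)
    refine Eq.trans ?_ ((Abelian.Ext.smul_eq_comp_mk₀ _ r).trans hcomp).symm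
    congr 1

lemma cocycleToExt_surjective {X : ModuleCat.{u} R} (P : ProjectiveResolution X)
    (Y : ModuleCat.{u} R) (i : ℕ) : Function.Surjective (cocycleToExt P Y i) := fun a ↦ by
  obtain ⟨f, hf, rfl⟩ := P.extMk_surjective a (i + 1) rfl
  exact ⟨⟨f, hf⟩, rfl⟩

lemma cocycleToExt_eq_zero_iff {X : ModuleCat.{u} R} (P : ProjectiveResolution X)
    (Y : ModuleCat.{u} R) (i : ℕ)
    (x : LinearMap.ker ((P.complex.linearYonedaObj R Y).d i (i + 1)).hom) :
    cocycleToExt P Y i x = 0 ↔ x.1 ∈ LinearMap.range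
      ((P.complex.linearYonedaObj R Y).d ((ComplexShape.up ℕ).prev i) i).hom := by
  cases i with
  | zero =>
    have hd : (P.complex.linearYonedaObj R Y).d ((ComplexShape.up ℕ).prev 0) 0 = 0 :=
      HomologicalComplex.shape _ _ _ (by simp)
    rw [hd, ModuleCat.hom_zero, LinearMap.range_zero, Submodule.mem_bot]
    exact extMk_zero_eq_zero_iff P (show P.complex.X 0 ⟶ Y from x.1) x.2
  | succ i =>
    rw [show (ComplexShape.up ℕ).prev (i + 1) = i by simp]
    exact P.extMk_eq_zero_iff (show P.complex.X (i + 1) ⟶ Y from x.1) (i + 2) rfl x.2 i rfl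

/-- `Ext^i_R(M, N)` in the form of Mathlib's `Abelian.Ext`, for which the long exact sequences are
available; `nonempty_extM_linearEquiv` compares it with the derived functor `extM`. -/
abbrev modExt (R : Type u) [CommRing R] (i : ℕ) (M N : Type u) [AddCommGroup M] [Module R M]
    [AddCommGroup N] [Module R N] : Type u :=
  Abelian.Ext (ModuleCat.of R M) (ModuleCat.of R N) i

theorem nonempty_extM_linearEquiv (i : ℕ) (M N : Type u) [AddCommGroup M] [Module R M]
    [AddCommGroup N] [Module R N] : Nonempty (extM R i M N ≃ₗ[R] modExt R i M N) := by
  let P := projectiveResolution (ModuleCat.of R M)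
  let C := P.complex.linearYonedaObj R (ModuleCat.of R N)
  obtain ⟨e⟩ := nonempty_homology_linearEquiv (C.sc' ((ComplexShape.up ℕ).prev i) i (i + 1))
    (cocycleToExt P _ i) (cocycleToExt_surjective P _ i) (cocycleToExt_eq_zero_iff P _ i)
  exact ⟨(P.isoExt i (ModuleCat.of R N)).toLinearEquiv ≪≫ₗ
    (C.homologyIsoSc' _ i (i + 1) rfl (by simp)).toLinearEquiv ≪≫ₗ e⟩

lemma subsingleton_extM_iff {i : ℕ} {M N : Type u} [AddCommGroup M] [Module R M]
    [AddCommGroup N] [Module R N] : Subsingleton (extM R i M N) ↔ Subsingleton (modExt R i M N) :=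
  (nonempty_extM_linearEquiv i M N).some.toEquiv.subsingleton_congr

end ExtComparison

section Ext

variable {R : Type u} [CommRing R] {A B C K N : Type u} [AddCommGroup A] [Module R A]
  [AddCommGroup B] [Module R B] [AddCommGroup C] [Module R C] [AddCommGroup K] [Module R K]
  [AddCommGroup N] [Module R N]

/-- The identification `Ext^0_R(A, K) = Hom_R(A, K)`. -/
noncomputable def modExtZeroEquiv (A K : Type u) [AddCommGroup A] [Module R A] [AddCommGroup K]
    [Module R K] : modExt R 0 A K ≃ₗ[R] (A →ₗ[R] K) :=
  Abelian.Ext.linearEquiv₀ (R := R) ≪≫ₗ ModuleCat.homLinearEquiv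

/-- The map `Ext^i(B, K) → Ext^i(A, K)` induced by `A → B`, as a linear function of the latter. -/
noncomputable def modExtMap (A B K : Type u) [AddCommGroup A] [Module R A] [AddCommGroup B]
    [Module R B] [AddCommGroup K] [Module R K] (i : ℕ) :
    (A →ₗ[R] B) →ₗ[R] modExt R i B K →ₗ[R] modExt R i A K :=
  Abelian.Ext.bilinearCompOfLinear R _ _ _ 0 i i (zero_add i) ∘ₗ
    (modExtZeroEquiv A B).symm.toLinearMap

lemma modExtMap_id (i : ℕ) : modExtMap A A K i LinearMap.id = LinearMap.id (R := R) :=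
  LinearMap.ext fun x ↦ Abelian.Ext.mk₀_id_comp x

lemma modExtMap_comp (g : B →ₗ[R] C) (f : A →ₗ[R] B) (i : ℕ) :
    modExtMap A C K i (g ∘ₗ f) = modExtMap A B K i f ∘ₗ modExtMap B C K i g :=
  LinearMap.ext fun x ↦
    (Abelian.Ext.mk₀_comp_mk₀_assoc (ModuleCat.ofHom f) (ModuleCat.ofHom g) x).symm

/-- The isomorphism `Ext^i(B, K) ≅ Ext^i(A, K)` induced by `A ≅ B`. -/
noncomputable def modExtCongr (e : A ≃ₗ[R] B) (K : Type u) [AddCommGroup K] [Module R K] (i : ℕ) :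
    modExt R i B K ≃ₗ[R] modExt R i A K :=
  LinearEquiv.ofLinearMap (modExtMap A B K i e) (modExtMap B A K i e.symm)
    (by rw [← modExtMap_comp, LinearEquiv.comp_coe, e.self_trans_symm]; exact modExtMap_id i)
    (by rw [← modExtMap_comp, LinearEquiv.comp_coe, e.symm_trans_self]; exact modExtMap_id i)

lemma mem_annihilator_modExt_of_sum_comp_eq {ι : Type*} [Fintype ι] {a : R} (f : ι → A →ₗ[R] B)
    (g : ι → B →ₗ[R] A) (hfg : ∑ j, g j ∘ₗ f j = a • LinearMap.id) (i : ℕ)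
    [Subsingleton (modExt R i B K)] : a ∈ Module.annihilator R (modExt R i A K) := by
  have hzero : modExtMap A A K i (a • LinearMap.id (R := R)) = 0 := by
    rw [← hfg, map_sum]
    refine Finset.sum_eq_zero fun j _ ↦ LinearMap.ext fun y ↦ ?_
    rw [modExtMap_comp, LinearMap.comp_apply, Subsingleton.elim (modExtMap B A K i (g j) y) 0,
      map_zero, LinearMap.zero_apply]
  rw [map_smul, modExtMap_id] at hzero
  exact Module.mem_annihilator.mpr (DFunLike.congr_fun hzero)

lemma annihilator_le_annihilator_modExt (i : ℕ) :
    Module.annihilator R A ≤ Module.annihilator R (modExt R i A K) := fun a ha ↦ by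
  have hzero : a • LinearMap.id (R := R) (M := A) = 0 :=
    LinearMap.ext fun y ↦ Module.mem_annihilator.mp ha y
  refine Module.mem_annihilator.mpr fun x ↦ ?_
  have := DFunLike.congr_fun (congrArg (modExtMap A A K i) hzero) x
  rwa [map_smul, modExtMap_id, map_zero] at this

lemma subsingleton_modExt_of_injective [Module.Injective R K] (i : ℕ) :
    Subsingleton (modExt R (i + 1) A K) := by
  have : Injective (ModuleCat.of R K) := Module.injective_object_of_injective_module R K
  exact subsingleton_of_forall_eq 0 Abelian.Ext.eq_zero_of_injective

/-- Exactness of `0 → A → B → C → 0`, for unbundled modules. -/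
structure IsShortExact (f : A →ₗ[R] B) (g : B →ₗ[R] C) : Prop where
  injective : Function.Injective f
  exact : Function.Exact f g
  surjective : Function.Surjective g

namespace IsShortExact

lemma ker_subtype {g : B →ₗ[R] C} (hg : Function.Surjective g) :
    IsShortExact (LinearMap.ker g).subtype g :=
  ⟨Submodule.subtype_injective _, g.exact_subtype_ker_map, hg⟩

lemma mkQ_range {f : A →ₗ[R] B} (hf : Function.Injective f) :
    IsShortExact f (LinearMap.range f).mkQ :=
  ⟨hf, f.exact_map_mkQ_range, Submodule.mkQ_surjective _⟩

open scoped Pointwise in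
lemma smul_mkQ {x : R} (hx : IsSMulRegular A x) :
    IsShortExact (LinearMap.lsmul R A x) (x • (⊤ : Submodule R A)).mkQ :=
  ⟨hx, LinearMap.exact_lsmul_mkQ_smul_top A x, Submodule.mkQ_surjective _⟩

variable {f : A →ₗ[R] B} {g : B →ₗ[R] C} (h : IsShortExact f g)

include h

lemma shortExact : (ShortComplex.mk (ModuleCat.ofHom f) (ModuleCat.ofHom g)
    (ModuleCat.hom_ext h.exact.linearMap_comp_eq_zero)).ShortExact :=
  ModuleCat.shortComplex_shortExact _ h.exact h.injective h.surjective

/-- The connecting map `Ext^i(A, K) → Ext^{i+1}(C, K)`. -/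
noncomputable def connectingLeft (K : Type u) [AddCommGroup K] [Module R K] (i : ℕ) :
    modExt R i A K →ₗ[R] modExt R (i + 1) C K :=
  h.shortExact.extClass.precompOfLinear R _ (add_comm 1 i)

/-- The connecting map `Ext^i(N, C) → Ext^{i+1}(N, A)`. -/
noncomputable def connectingRight (N : Type u) [AddCommGroup N] [Module R N] (i : ℕ) :
    modExt R i N C →ₗ[R] modExt R (i + 1) N A :=
  h.shortExact.extClass.postcompOfLinear R _ rfl

lemma connectingLeft_injective (i : ℕ) [Subsingleton (modExt R i B K)] :
    Function.Injective (h.connectingLeft K i) := by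
  refine (injective_iff_map_eq_zero _).mpr fun x hx ↦ ?_
  obtain ⟨y, rfl⟩ :=
    Abelian.Ext.contravariant_sequence_exact₁ h.shortExact _ x (add_comm 1 i) hx
  rw [show y = 0 from Subsingleton.elim (α := modExt R i B K) _ _, Abelian.Ext.comp_zero]

lemma connectingLeft_surjective (i : ℕ) [Subsingleton (modExt R (i + 1) B K)] :
    Function.Surjective (h.connectingLeft K i) := fun x ↦
  Abelian.Ext.contravariant_sequence_exact₃ h.shortExact _ x
    (Subsingleton.elim (α := modExt R (i + 1) B K) _ _) (add_comm 1 i)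

lemma connectingRight_injective (i : ℕ) [Subsingleton (modExt R i N B)] :
    Function.Injective (h.connectingRight N i) := by
  refine (injective_iff_map_eq_zero _).mpr fun x hx ↦ ?_
  obtain ⟨y, rfl⟩ := Abelian.Ext.covariant_sequence_exact₃ _ h.shortExact x rfl hx
  rw [show y = 0 from Subsingleton.elim (α := modExt R i N B) _ _, Abelian.Ext.zero_comp]

lemma connectingRight_surjective (i : ℕ) [Subsingleton (modExt R (i + 1) N B)] :
    Function.Surjective (h.connectingRight N i) := fun x ↦
  Abelian.Ext.covariant_sequence_exact₁ _ h.shortExact x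
    (Subsingleton.elim (α := modExt R (i + 1) N B) _ _) rfl

/-- Dimension shifting in the first variable. -/
noncomputable def shiftLeft (i : ℕ) [Subsingleton (modExt R i B K)]
    [Subsingleton (modExt R (i + 1) B K)] : modExt R i A K ≃ₗ[R] modExt R (i + 1) C K :=
  LinearEquiv.ofBijective _ ⟨h.connectingLeft_injective i, h.connectingLeft_surjective i⟩

/-- Dimension shifting in the second variable. -/
noncomputable def shiftRight (i : ℕ) [Subsingleton (modExt R i N B)]
    [Subsingleton (modExt R (i + 1) N B)] : modExt R i N C ≃ₗ[R] modExt R (i + 1) N A :=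
  LinearEquiv.ofBijective _ ⟨h.connectingRight_injective i, h.connectingRight_surjective i⟩

lemma connectingLeft_zero_eq_zero_iff (φ : A →ₗ[R] K) :
    h.connectingLeft K 0 ((modExtZeroEquiv A K).symm φ) = 0 ↔
      φ ∈ LinearMap.range (f.lcomp R K) := by
  constructor
  · intro hφ
    obtain ⟨y, hy⟩ :=
      Abelian.Ext.contravariant_sequence_exact₁ h.shortExact _ _ (add_comm 1 0) hφ
    obtain ⟨ψ, rfl⟩ := Abelian.Ext.homEquiv₀.symm.surjective y
    simp only [Abelian.Ext.homEquiv₀_symm_apply, Abelian.Ext.mk₀_comp_mk₀] at hy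
    exact ⟨ψ.hom, congrArg ModuleCat.Hom.hom (Abelian.Ext.homEquiv₀.symm.injective hy)⟩
  · rintro ⟨ψ, rfl⟩
    refine Eq.trans ?_ (h.shortExact.extClass_comp_assoc
      (Abelian.Ext.mk₀ (ModuleCat.ofHom ψ)) (n := 0) (n' := 1) (h := rfl))
    rw [Abelian.Ext.mk₀_comp_mk₀]
    rfl

/-- If `Ext^1(B, K) = 0` then `Ext^1(C, K)` is the cokernel of `Hom(B, K) → Hom(A, K)`. -/
noncomputable def extOneEquiv [Subsingleton (modExt R 1 B K)] :
    ((A →ₗ[R] K) ⧸ LinearMap.range (f.lcomp R K)) ≃ₗ[R] modExt R 1 C K :=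
  Submodule.quotEquivOfEq _ _ (by
      ext φ
      exact (h.connectingLeft_zero_eq_zero_iff φ).symm) ≪≫ₗ
    (h.connectingLeft K 0 ∘ₗ (modExtZeroEquiv A K).symm.toLinearMap).quotKerEquivOfSurjective
      ((h.connectingLeft_surjective 0).comp (LinearEquiv.surjective _))

end IsShortExact

end Ext

section InjectiveHull

lemma exists_maximal_disjoint_ge {α : Type*} [CompleteLattice α] [IsCompactlyGenerated α]
    {a b : α} (hab : Disjoint a b) : ∃ m, b ≤ m ∧ Maximal (Disjoint a) m := by
  refine zorn_le_nonempty₀ {x | Disjoint a x} (fun s hs hchain _ _ ↦ ?_) b hab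
  exact ⟨sSup s, (hchain.directedOn.disjoint_sSup_right).mpr fun x hx ↦ hs hx,
    fun x hx ↦ le_sSup hx⟩

variable {R : Type u} [CommRing R] {J : Type u} [AddCommGroup J] [Module R J]

/-- The summand `E` is an injective hull of `L`. -/
theorem exists_isCompl_maximal_disjoint [Module.Injective R J] (L : Submodule R J) :
    ∃ E T : Submodule R J, IsCompl E T ∧ L ≤ E ∧ Maximal (Disjoint L) T := by
  obtain ⟨T, -, hT⟩ := exists_maximal_disjoint_ge (disjoint_bot_right (a := L))
  obtain ⟨E, hLE, hE⟩ := exists_maximal_disjoint_ge hT.prop.symm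
  have hinj : Function.Injective (T.mkQ ∘ₗ E.subtype) := by
    rw [← LinearMap.ker_eq_bot, LinearMap.ker_comp, T.ker_mkQ]
    exact Submodule.disjoint_iff_comap_eq_bot.mp hE.prop.symm
  obtain ⟨ψ, hψ⟩ := Module.Injective.extension_property R J _ _ _ hinj E.subtype
  let φ : J →ₗ[R] J := ψ ∘ₗ T.mkQ
  have hφE (x : J) (hx : x ∈ E) : φ x = x := DFunLike.congr_fun hψ ⟨x, hx⟩
  have hφT (x : J) (hx : x ∈ T) : φ x = 0 := by simp [φ, (Submodule.Quotient.mk_eq_zero T).mpr hx]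
  have hcomap : T.comap φ = T := by
    refine (hT.eq_of_le (Submodule.disjoint_def.mpr fun x hxL hxT ↦ ?_) fun x hx ↦ ?_).symm
    · rw [Submodule.mem_comap, hφE x (hLE hxL)] at hxT
      exact Submodule.disjoint_def.mp hT.prop x hxL hxT
    · simp [hφT x hx]
  have hker (x : J) (hx : φ x ∈ T) : x ∈ T := by rwa [← hcomap]
  have hrange : E = LinearMap.range φ := by
    refine hE.eq_of_le (Submodule.disjoint_def.mpr ?_) fun x hx ↦ ⟨x, hφE x hx⟩
    rintro _ hxT ⟨y, rfl⟩
    exact hφT y (hker y hxT)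
  refine ⟨E, T, ⟨hE.prop.symm, codisjoint_iff_le_sup.mpr fun x _ ↦ ?_⟩, hLE, hT⟩
  have hφx : φ x ∈ E := hrange ▸ ⟨x, rfl⟩
  have hsub : x - φ x ∈ T := hker _ (by simp [hφE _ hφx])
  simpa using Submodule.add_mem_sup hφx hsub

lemma injective_of_isCompl [Module.Injective R J] {E T : Submodule R J} (h : IsCompl E T) :
    Module.Injective R E where
  out X Y _ _ _ _ f hf g := by
    obtain ⟨φ, hφ⟩ := Module.Injective.out f hf (E.subtype ∘ₗ g)
    refine ⟨E.projectionOnto T h ∘ₗ φ, fun x ↦ ?_⟩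
    rw [LinearMap.comp_apply, hφ, LinearMap.comp_apply, Submodule.subtype_apply,
      Submodule.projectionOnto_apply_left]

theorem exists_injective_torsionBySet_eq_bot {I : Ideal R} {K : Type u} [AddCommGroup K]
    [Module R K] (hK : Submodule.torsionBySet R K I = ⊥) :
    ∃ (J : ModuleCat.{u} R) (f : K →ₗ[R] J), Module.Injective R J ∧ Function.Injective f ∧
      Submodule.torsionBySet R J I = ⊥ := by
  let J₀ : ModuleCat.{u} R := Injective.under (ModuleCat.of R K)
  have : Module.Injective R J₀ := Module.injective_module_of_injective_object R J₀
    (inj := inferInstanceAs (Injective (Injective.under _)))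
  let ι : K →ₗ[R] J₀ := (Injective.ι (ModuleCat.of R K)).hom
  have hι : Function.Injective ι :=
    (ModuleCat.mono_iff_injective _).mp (Injective.ι_mono (ModuleCat.of R K))
  obtain ⟨E, T, hET, hιE, hT⟩ := exists_isCompl_maximal_disjoint (LinearMap.range ι)
  refine ⟨ModuleCat.of R E, ι.codRestrict E fun x ↦ hιE ⟨x, rfl⟩, injective_of_isCompl hET,
    fun _ _ h ↦ hι (congrArg Subtype.val h), (Submodule.eq_bot_iff _).mpr fun e he ↦ ?_⟩
  rw [Submodule.mem_torsionBySet_iff] at he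
  have hdisj : Disjoint (LinearMap.range ι) (T ⊔ R ∙ e.1) := by
    rw [Submodule.disjoint_def]
    rintro _ ⟨k, rfl⟩ hk
    obtain ⟨t, ht, _, hs, htk⟩ := Submodule.mem_sup.mp hk
    obtain ⟨r, rfl⟩ := Submodule.mem_span_singleton.mp hs
    have ht0 : t = 0 := Submodule.disjoint_def.mp hET.disjoint t
      (eq_sub_of_add_eq htk ▸ E.sub_mem (hιE ⟨k, rfl⟩) (E.smul_mem r e.2)) ht
    have hk0 : k ∈ Submodule.torsionBySet R K I := by
      refine (Submodule.mem_torsionBySet_iff _ _).mpr fun a ↦ hι ?_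
      rw [map_smul, ← htk, ht0, zero_add, smul_comm, map_zero, ← Submodule.coe_smul, he a,
        Submodule.coe_zero, smul_zero]
    rw [hK, Submodule.mem_bot] at hk0
    rw [hk0, map_zero]
  have heT : e.1 ∈ T := hT.eq_of_le hdisj le_sup_left ▸
    Submodule.mem_sup_right (Submodule.mem_span_singleton_self e.1)
  exact Subtype.ext (Submodule.disjoint_def.mp hET.disjoint e.1 e.2 heT)

end InjectiveHull

section DimensionShift

variable {R : Type u} [CommRing R]

lemma torsionBySet_mul_eq_bot {I J : Ideal R} {K : Type u} [AddCommGroup K] [Module R K]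
    (hI : Submodule.torsionBySet R K I = ⊥) (hJ : Submodule.torsionBySet R K J = ⊥) :
    Submodule.torsionBySet R K (I * J : Ideal R) = ⊥ := by
  rw [Submodule.eq_bot_iff] at hI hJ ⊢
  simp only [Submodule.mem_torsionBySet_iff, Subtype.forall, SetLike.mem_coe] at hI hJ ⊢
  refine fun x hx ↦ hJ x fun b hb ↦ hI _ fun a ha ↦ ?_
  rw [smul_smul]
  exact hx _ (Ideal.mul_mem_mul ha hb)

lemma isTorsionBySet_quotient_of_le {I J : Ideal R} (h : I ≤ J) :
    Module.IsTorsionBySet R (R ⧸ J) I :=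
  (Module.isTorsionBySet_quotient_iff J I).mpr fun x _ hr ↦ J.mul_mem_right x (h hr)

/-- The identification `Hom(R/c, K) = K[c]`, evaluation at `1`. -/
def homQuotientEquivTorsion (c : Ideal R) (K : Type u) [AddCommGroup K] [Module R K] :
    ((R ⧸ c) →ₗ[R] K) ≃ₗ[R] Submodule.torsionBySet R K c where
  toFun φ := ⟨φ 1, (Submodule.mem_torsionBySet_iff _ _).mpr fun a ↦ by
    rw [← map_smul, isTorsionBySet_quotient_of_le le_rfl, map_zero]⟩
  map_add' _ _ := rfl
  map_smul' _ _ := rfl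
  invFun y := Submodule.liftQ c (LinearMap.toSpanSingleton R K y.1) fun a ha ↦
    (Submodule.mem_torsionBySet_iff _ _).mp y.2 ⟨a, ha⟩
  left_inv φ := Submodule.linearMap_qext _ (LinearMap.ext_ring (one_smul R _))
  right_inv y := Subtype.ext (one_smul R y.1)

lemma torsionBySet_eq_bot_iff_subsingleton_modExt (c : Ideal R) (K : Type u) [AddCommGroup K]
    [Module R K] :
    Submodule.torsionBySet R K c = ⊥ ↔ Subsingleton (modExt R 0 (R ⧸ c) K) := by
  rw [← Submodule.subsingleton_iff_eq_bot]
  exact (modExtZeroEquiv _ K ≪≫ₗ homQuotientEquivTorsion c K).toEquiv.subsingleton_congr.symm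

lemma subsingleton_modExt_of_injective_of_torsionBySet_eq_bot {I : Ideal R} {N J : Type u}
    [AddCommGroup N] [Module R N] [AddCommGroup J] [Module R J] [Module.Injective R J]
    (hN : Module.IsTorsionBySet R N I) (hJ : Submodule.torsionBySet R J I = ⊥) (i : ℕ) :
    Subsingleton (modExt R i N J) := by
  cases i with
  | zero =>
    refine (modExtZeroEquiv (R := R) N J).toEquiv.subsingleton_congr.mpr
      (subsingleton_of_forall_eq 0 fun φ ↦ LinearMap.ext fun y ↦ ?_)
    have hφy : φ y ∈ Submodule.torsionBySet R J I :=
      (Submodule.mem_torsionBySet_iff _ _).mpr fun a ↦ by rw [← map_smul, hN, map_zero]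
    rwa [hJ] at hφy
  | succ i => exact subsingleton_modExt_of_injective i

/-- Embedding `K` into an injective module without `c₁c₂`-torsion shifts the vanishing range of
`Ext^•(R/c_j, K)` down by one, so that `n` cosyzygies suffice. -/
theorem exists_modExt_shift (c₁ c₂ : Ideal R) (n : ℕ) (K : Type u) [AddCommGroup K] [Module R K]
    (h₁ : ∀ i < n, Subsingleton (modExt R i (R ⧸ c₁) K))
    (h₂ : ∀ i < n, Subsingleton (modExt R i (R ⧸ c₂) K)) :
    ∃ E : ModuleCat.{u} R, ∀ (N : Type u) [AddCommGroup N] [Module R N],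
      Module.IsTorsionBySet R N (c₁ * c₂ : Ideal R) →
        ∀ i, Nonempty (modExt R (n + i) N K ≃ₗ[R] modExt R i N E) := by
  induction n generalizing K with
  | zero => exact ⟨ModuleCat.of R K, fun N _ _ _ i ↦ ⟨by rw [zero_add]⟩⟩
  | succ n ih =>
    obtain ⟨J, f, _, hf, hJ⟩ := exists_injective_torsionBySet_eq_bot (torsionBySet_mul_eq_bot
      ((torsionBySet_eq_bot_iff_subsingleton_modExt c₁ K).mpr (h₁ 0 n.succ_pos))
      ((torsionBySet_eq_bot_iff_subsingleton_modExt c₂ K).mpr (h₂ 0 n.succ_pos)))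
    let shift (N : Type u) [AddCommGroup N] [Module R N]
        (hN : Module.IsTorsionBySet R N (c₁ * c₂ : Ideal R)) (i : ℕ) :
        modExt R i N (J ⧸ LinearMap.range f) ≃ₗ[R] modExt R (i + 1) N K :=
      have := subsingleton_modExt_of_injective_of_torsionBySet_eq_bot hN hJ
      (IsShortExact.mkQ_range hf).shiftRight i
    obtain ⟨E, hE⟩ := ih (J ⧸ LinearMap.range f)
      (fun i hi ↦ (shift _ (isTorsionBySet_quotient_of_le Ideal.mul_le_left)
        i).toEquiv.subsingleton_congr.mpr (h₁ (i + 1) (Nat.succ_lt_succ hi)))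
      (fun i hi ↦ (shift _ (isTorsionBySet_quotient_of_le Ideal.mul_le_right)
        i).toEquiv.subsingleton_congr.mpr (h₂ (i + 1) (Nat.succ_lt_succ hi)))
    refine ⟨E, fun N _ _ hN i ↦ ⟨?_⟩⟩
    rw [Nat.add_right_comm]
    exact (shift N hN (n + i)).symm ≪≫ₗ (hE N hN i).some

end DimensionShift

section GradeComparison

open scoped Pointwise

variable {R : Type u} [CommRing R] {K L : Type u} [AddCommGroup K] [Module R K] [AddCommGroup L]
  [Module R L]

lemma IsShortExact.compRight {A B C : Type u} [AddCommGroup A] [Module R A] [AddCommGroup B]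
    [Module R B] [AddCommGroup C] [Module R C] {f : A →ₗ[R] B} {g : B →ₗ[R] C}
    (h : IsShortExact f g) (N : Type u) [AddCommGroup N] [Module R N]
    [Subsingleton (modExt R 1 N A)] :
    IsShortExact (f.compRight R (M := N)) (g.compRight R (M := N)) where
  injective _ _ hφ := LinearMap.ext fun x ↦ h.injective (DFunLike.congr_fun hφ x)
  exact ψ := by
    refine ⟨fun hψ ↦ ?_, ?_⟩
    · have hmem (x : N) : ψ x ∈ LinearMap.range f := (h.exact _).mp (DFunLike.congr_fun hψ x)
      let e := LinearEquiv.ofInjective f h.injective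
      refine ⟨e.symm.toLinearMap ∘ₗ ψ.codRestrict _ hmem, LinearMap.ext fun x ↦ ?_⟩
      exact congrArg Subtype.val (e.apply_symm_apply ⟨ψ x, hmem x⟩)
    · rintro ⟨φ, rfl⟩
      exact LinearMap.ext fun x ↦ h.exact.apply_apply_eq_zero (φ x)
  surjective ψ := by
    obtain ⟨φ, hφ⟩ := Abelian.Ext.covariant_sequence_exact₃ _ h.shortExact
      (Abelian.Ext.mk₀ (ModuleCat.ofHom ψ)) rfl (Subsingleton.elim (α := modExt R 1 N A) _ _)
    obtain ⟨φ, rfl⟩ := Abelian.Ext.homEquiv₀.symm.surjective φ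
    simp only [Abelian.Ext.homEquiv₀_symm_apply, Abelian.Ext.mk₀_comp_mk₀] at hφ
    exact ⟨φ.hom, congrArg ModuleCat.Hom.hom (Abelian.Ext.homEquiv₀.symm.injective hφ)⟩

lemma subsingleton_modExt_congr_right (N : Type u) [AddCommGroup N] [Module R N]
    (e : K ≃ₗ[R] L) (i : ℕ) : Subsingleton (modExt R i N K) ↔ Subsingleton (modExt R i N L) :=
  ((Abelian.extFunctorObj (ModuleCat.of R N) i).mapIso
    e.toModuleIso).addCommGroupIsoToAddEquiv.toEquiv.subsingleton_congr

lemma subsingleton_modExt_succ_of_isSMulRegular {N : Type u} [AddCommGroup N] [Module R N] {x : R}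
    (hxL : IsSMulRegular L x) (hxN : x ∈ Module.annihilator R N) {i : ℕ}
    [Subsingleton (modExt R i N (L ⧸ x • (⊤ : Submodule R L)))] :
    Subsingleton (modExt R (i + 1) N L) := by
  refine subsingleton_of_forall_eq 0 fun y ↦ ?_
  have hy : y.comp (Abelian.Ext.mk₀ (x • 𝟙 (ModuleCat.of R L))) (add_zero _) = 0 :=
    (Abelian.Ext.smul_eq_comp_mk₀ y x).symm.trans (Module.mem_annihilator.mp
      (annihilator_le_annihilator_modExt _ hxN) y)
  obtain ⟨z, rfl⟩ := Abelian.Ext.covariant_sequence_exact₁ _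
    (IsShortExact.smul_mkQ hxL).shortExact y hy rfl
  rw [show z = 0 from
    Subsingleton.elim (α := modExt R i N (L ⧸ x • (⊤ : Submodule R L))) _ _, Abelian.Ext.zero_comp]

lemma IsSemidualizing.faithfulSMul (hK : IsSemidualizing R K) : FaithfulSMul R K where
  eq_of_smul_eq_smul h := hK.2.1.injective (LinearMap.ext h)

lemma subsingleton_extM_of_lt_gradeI {c : Ideal R} {i : ℕ} (hi : i < gradeI R c) :
    Subsingleton (extM R i (R ⧸ c) R) := by
  by_contra h
  exact hi.not_ge (sInf_le ⟨i, rfl, h⟩)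

variable [IsNoetherianRing R] [Module.Finite R K] [FaithfulSMul R K] [Module.Finite R L]

lemma exists_mem_isSMulRegular_of_subsingleton_linearMap {c : Ideal R}
    [Subsingleton ((R ⧸ c) →ₗ[R] K →ₗ[R] L)] : ∃ x ∈ c, IsSMulRegular L x := by
  have : Subsingleton ((K ⧸ c • (⊤ : Submodule R K)) →ₗ[R] L) :=
    (((TensorProduct.quotTensorEquivQuotSMul K c).symm.congrLeft L R ≪≫ₗ
      (TensorProduct.lift.equiv (RingHom.id R) _ K L).symm).toEquiv).subsingleton
  obtain ⟨r, hr, hrL⟩ := IsSMulRegular.subsingleton_linearMap_iff.mp this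
  have hrad := Module.support_quotient (M := K) c
  rw [Module.support_eq_zeroLocus, Module.support_eq_zeroLocus,
    Module.annihilator_eq_bot.mpr ‹FaithfulSMul R K›, Submodule.bot_coe,
    PrimeSpectrum.zeroLocus_singleton_zero, Set.univ_inter, PrimeSpectrum.zeroLocus_eq_iff] at hrad
  obtain ⟨k, hk⟩ := hrad ▸ Ideal.le_radical hr
  exact ⟨r ^ k, hk, hrL.pow k⟩

theorem subsingleton_modExt_quotient_of_linearMap {c : Ideal R} {n : ℕ}
    (hKL : ∀ i, Subsingleton (modExt R (i + 1) K L))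
    (hHom : ∀ j < n, Subsingleton (modExt R j (R ⧸ c) (K →ₗ[R] L))) :
    ∀ j < n, Subsingleton (modExt R j (R ⧸ c) L) := by
  induction n generalizing L with
  | zero => simp
  | succ n ih =>
    have : Subsingleton ((R ⧸ c) →ₗ[R] K →ₗ[R] L) :=
      (modExtZeroEquiv _ _).toEquiv.subsingleton_congr.mp (hHom 0 n.succ_pos)
    obtain ⟨x, hxc, hx⟩ := exists_mem_isSMulRegular_of_subsingleton_linearMap (K := K) (L := L)
      (c := c)
    have hxann : x ∈ Module.annihilator R (R ⧸ c) := by rwa [Ideal.annihilator_quotient]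
    have hseq := IsShortExact.smul_mkQ hx
    have hseqHom := hseq.compRight K
    have hKL' (i : ℕ) : Subsingleton (modExt R (i + 1) K (L ⧸ x • (⊤ : Submodule R L))) :=
      (hseq.connectingRight_injective (i + 1)).subsingleton
    have hHom' (j : ℕ) (hj : j < n) :
        Subsingleton (modExt R j (R ⧸ c) (K →ₗ[R] L ⧸ x • (⊤ : Submodule R L))) :=
      have := hHom j (Nat.lt_succ_of_lt hj)
      have := hHom (j + 1) (Nat.succ_lt_succ hj)
      (hseqHom.connectingRight_injective j).subsingleton
    rintro (_ | j) hj
    · exact (modExtZeroEquiv _ _).toEquiv.subsingleton_congr.mpr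
        (IsSMulRegular.subsingleton_linearMap_iff.mpr ⟨x, hxann, hx⟩)
    · have := ih hKL' hHom' j (Nat.lt_of_succ_lt_succ hj)
      exact subsingleton_modExt_succ_of_isSMulRegular hx hxann

omit [Module.Finite R K] [FaithfulSMul R K] in
theorem IsSemidualizing.subsingleton_modExt_of_lt_gradeI (hK : IsSemidualizing R K)
    {c : Ideal R} {i : ℕ} (hi : i < gradeI R c) :
    Subsingleton (modExt R i (R ⧸ c) K) := by
  have := hK.1
  have := hK.faithfulSMul
  refine subsingleton_modExt_quotient_of_linearMap (K := K) (n := i + 1)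
    (fun j ↦ subsingleton_extM_iff.mp (hK.2.2 (j + 1) j.succ_pos)) (fun j hj ↦ ?_) i i.lt_succ_self
  have hj' : (j : ℕ∞) < gradeI R c := lt_of_le_of_lt (by exact_mod_cast Nat.le_of_lt_succ hj) hi
  exact (subsingleton_modExt_congr_right _ (LinearEquiv.ofBijective _ hK.2.1) j).mp
    (subsingleton_extM_iff.mp (subsingleton_extM_of_lt_gradeI hj'))

end GradeComparison

section DualSequence

variable {R : Type u} [CommRing R] {K P M N : Type u} [AddCommGroup K] [Module R K]
  [AddCommGroup P] [Module R P] [AddCommGroup M] [Module R M] [AddCommGroup N] [Module R N]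

/-- The exact sequence `0 → Hom(M, K) → Hom(P, K) → N → 0` dual to a surjection `ε : P → M`, where
`P` is weakly reflexive and `Hom(P, K)` is acyclic for `Hom(-, K)`. It presents `N` as the image of
`Hom(P, K)` in the dual of a syzygy of `M`. -/
structure IsDualSequence (ε : P →ₗ[R] M) (π : (P →ₗ[R] K) →ₗ[R] N) : Prop where
  surjective : Function.Surjective ε
  isShortExact : IsShortExact (ε.lcomp R K) π
  subsingleton_modExt : ∀ i, Subsingleton (modExt R (i + 1) (P →ₗ[R] K) K)
  evalK_surjective : Function.Surjective (evalK R K P)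

namespace IsDualSequence

variable {ε : P →ₗ[R] M} {π : (P →ₗ[R] K) →ₗ[R] N} (h : IsDualSequence ε π)

include h

lemma range_evalK :
    LinearMap.range (evalK R K M) = LinearMap.range ((ε.lcomp R K).lcomp R K) := calc
  _ = LinearMap.range (evalK R K M ∘ₗ ε) :=
    (LinearMap.range_comp_of_range_eq_top _ (LinearMap.range_eq_top.mpr h.surjective)).symm
  _ = LinearMap.range ((ε.lcomp R K).lcomp R K ∘ₗ evalK R K P) := rfl
  _ = _ := LinearMap.range_comp_of_range_eq_top _ (LinearMap.range_eq_top.mpr h.evalK_surjective)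

/-- `Ext^1(N, K)` is the cokernel of the biduality map of `M`. -/
noncomputable def modExtOneEquiv :
    (((M →ₗ[R] K) →ₗ[R] K) ⧸ LinearMap.range (evalK R K M)) ≃ₗ[R] modExt R 1 N K :=
  have := h.subsingleton_modExt 0
  Submodule.quotEquivOfEq _ _ h.range_evalK ≪≫ₗ h.isShortExact.extOneEquiv

/-- Dimension shifting along the dual sequence. -/
noncomputable def modExtShift (i : ℕ) :
    modExt R (i + 1) (M →ₗ[R] K) K ≃ₗ[R] modExt R (i + 2) N K :=
  have := h.subsingleton_modExt
  h.isShortExact.shiftLeft (i + 1)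

end IsDualSequence

/-- The image of `Hom(P, K)` in the dual of the kernel of `P → M`. -/
abbrev dualRestrictRange (K : Type u) [AddCommGroup K] [Module R K] (f : P →ₗ[R] M) :
    Submodule R (LinearMap.ker f →ₗ[R] K) :=
  LinearMap.range ((LinearMap.ker f).subtype.lcomp R K)

lemma IsGKDimZero.isDualSequence (hP : IsGKDimZero R K P) {f : P →ₗ[R] M}
    (hf : Function.Surjective f) :
    IsDualSequence (K := K) f ((LinearMap.ker f).subtype.lcomp R K).rangeRestrict where
  surjective := hf
  isShortExact := ⟨LinearMap.lcomp_injective_of_surjective f hf, fun φ ↦ by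
    rw [← LinearMap.exact_lcomp_of_exact_of_surjective K f.exact_subtype_ker_map hf φ,
      Subtype.ext_iff]
    rfl, LinearMap.surjective_rangeRestrict _⟩
  subsingleton_modExt i := subsingleton_extM_iff.mp (hP.2.2.2 (i + 1) i.succ_pos)
  evalK_surjective := hP.2.1.surjective

lemma IsGKDimZero.subsingleton_modExt (hP : IsGKDimZero R K P) (i : ℕ) :
    Subsingleton (modExt R (i + 1) P K) :=
  subsingleton_extM_iff.mp (hP.2.2.1 (i + 1) i.succ_pos)

end DualSequence

section Perfect

variable {R : Type u} [CommRing R] {K : Type u} [AddCommGroup K] [Module R K]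

theorem GKDimLE.subsingleton_modExt {n : ℕ} {M : ModuleCat.{u} R} (h : GKDimLE R K n M) (i : ℕ) :
    Subsingleton (modExt R (n + (i + 1)) M K) := by
  induction n generalizing M with
  | zero => exact (zero_add (i + 1)).symm ▸ IsGKDimZero.subsingleton_modExt h i
  | succ n ih =>
    obtain ⟨G, f, hG, hf, hker⟩ := h
    have := ih hker
    have := hG.subsingleton_modExt
    rw [Nat.add_right_comm]
    exact ((IsShortExact.ker_subtype hf).connectingLeft_surjective _).subsingleton

variable {G M : Type u} [AddCommGroup G] [Module R G] [AddCommGroup M] [Module R M]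

lemma mem_annihilator_modExt_one_iff {f : G →ₗ[R] M} (hf : Function.Surjective f)
    [Subsingleton (modExt R 1 G K)] {a : R} :
    a ∈ Module.annihilator R (modExt R 1 M K) ↔
      ∀ φ : LinearMap.ker f →ₗ[R] K, a • φ ∈ dualRestrictRange K f := by
  rw [← (IsShortExact.ker_subtype hf).extOneEquiv.annihilator_eq, Submodule.annihilator_quotient]
  simp only [Submodule.mem_colon, Set.mem_univ, forall_const]

lemma dualRestrictRange_eq_top {f : G →ₗ[R] M} (hf : Function.Surjective f)
    [Subsingleton (modExt R 1 G K)] [Subsingleton (modExt R 1 M K)] :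
    dualRestrictRange K f = ⊤ :=
  (Submodule.eq_top_iff').mpr fun φ ↦ one_smul R φ ▸
    (mem_annihilator_modExt_one_iff hf).mp
      (Module.mem_annihilator.mpr fun _ ↦ Subsingleton.elim _ _) φ

lemma mem_annihilator_modExt_of_smul_mem {W : Submodule R M} {a : R} (hW : ∀ x, a • x ∈ W)
    (i : ℕ) [Subsingleton (modExt R i M K)] : a ∈ Module.annihilator R (modExt R i W K) :=
  mem_annihilator_modExt_of_sum_comp_eq (ι := Unit) (fun _ ↦ W.subtype)
    (fun _ ↦ (LinearMap.lsmul R M a).codRestrict W hW)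
    (by rw [Fintype.sum_unique]; exact LinearMap.ext fun _ ↦ rfl) i

lemma subsingleton_modExt_ker {f : G →ₗ[R] M} (hG : IsGKDimZero R K G)
    (hf : Function.Surjective f) (i : ℕ) [Subsingleton (modExt R (i + 2) M K)] :
    Subsingleton (modExt R (i + 1) (LinearMap.ker f) K) :=
  have := hG.subsingleton_modExt
  ((IsShortExact.ker_subtype hf).connectingLeft_injective (i + 1)).subsingleton

lemma annihilator_modExt_ker {f : G →ₗ[R] M} (hG : IsGKDimZero R K G)
    (hf : Function.Surjective f) (i : ℕ) :
    Module.annihilator R (modExt R (i + 1) (LinearMap.ker f) K) =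
      Module.annihilator R (modExt R (i + 2) M K) :=
  have := hG.subsingleton_modExt
  ((IsShortExact.ker_subtype hf).shiftLeft (i + 1)).annihilator_eq

theorem mem_annihilator_modExt_dualRestrictRange {k : ℕ} {f : G →ₗ[R] M}
    (hG : IsGKDimZero R K G) (hf : Function.Surjective f)
    (hker : GKDimLE R K k (ModuleCat.of R (LinearMap.ker f)))
    (hM : ∀ i < k, Subsingleton (modExt R (i + 1) M K)) {a : R}
    (ha : a ∈ Module.annihilator R (modExt R (k + 1) M K)) (i : ℕ) :
    a ∈ Module.annihilator R (modExt R (i + 1) (dualRestrictRange K f) K) := by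
  have := hG.subsingleton_modExt 0
  induction k generalizing G M i with
  | zero =>
    have := subsingleton_extM_iff.mp (hker.2.2.2 (i + 1) i.succ_pos)
    exact mem_annihilator_modExt_of_smul_mem ((mem_annihilator_modExt_one_iff hf).mp ha) (i + 1)
  | succ k ih =>
    obtain ⟨G', g, hG', hg, hker'⟩ := hker
    have hdual := ih hG' hg hker'
      (fun j hj ↦
        have := hM (j + 1) (Nat.succ_lt_succ hj)
        subsingleton_modExt_ker hG hf j)
      (by rwa [annihilator_modExt_ker hG hf]) (i + 1) (hG'.subsingleton_modExt 0)
    have := hM 0 k.succ_pos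
    rwa [((hG'.isDualSequence hg).modExtShift i).symm.annihilator_eq,
      (modExtCongr (LinearEquiv.ofTop _ (dualRestrictRange_eq_top hf)) K (i + 1)).annihilator_eq]
      at hdual

theorem exists_forall_smul_eq_apply {k : ℕ} {f : G →ₗ[R] M}
    (hG : IsGKDimZero R K G) (hf : Function.Surjective f)
    (hker : GKDimLE R K k (ModuleCat.of R (LinearMap.ker f)))
    (hM : ∀ i < k, Subsingleton (modExt R (i + 1) M K)) {a : R}
    (ha : a ∈ Module.annihilator R (modExt R (k + 1) M K)) (χ : dualRestrictRange K f →ₗ[R] K) :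
    ∃ z : LinearMap.ker f, ∀ w : dualRestrictRange K f, a • χ w = w.1 z := by
  have := hG.subsingleton_modExt 0
  cases k with
  | zero =>
    have hW := (mem_annihilator_modExt_one_iff hf).mp ha
    obtain ⟨z, hz⟩ := hker.2.1.surjective (χ ∘ₗ (LinearMap.lsmul R _ a).codRestrict _ hW)
    refine ⟨z, fun w ↦ ?_⟩
    rw [← map_smul]
    exact (DFunLike.congr_fun hz w.1).symm
  | succ k =>
    obtain ⟨G', g, hG', hg, hker'⟩ := hker
    have := hM 0 k.succ_pos
    let e := LinearEquiv.ofTop _ (dualRestrictRange_eq_top (K := K) hf)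
    have hcoker := mem_annihilator_modExt_dualRestrictRange hG' hg hker'
      (fun j hj ↦
        have := hM (j + 1) (Nat.succ_lt_succ hj)
        subsingleton_modExt_ker hG hf j)
      (by rwa [annihilator_modExt_ker hG hf]) 0
    rw [← (hG'.isDualSequence hg).modExtOneEquiv.annihilator_eq, Submodule.annihilator_quotient,
      Submodule.mem_colon] at hcoker
    obtain ⟨z, hz⟩ := hcoker (χ ∘ₗ e.symm.toLinearMap) trivial
    exact ⟨z, fun w ↦ (DFunLike.congr_fun hz (e w)).symm⟩

theorem GKDimLE.annihilator_modExt_le {n : ℕ} {S : ModuleCat.{u} R} (hS : GKDimLE R K n S)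
    (hExt : ∀ i < n, Subsingleton (modExt R i S K)) :
    Module.annihilator R (modExt R n S K) ≤ Module.annihilator R S := by
  intro a ha
  rw [Module.mem_annihilator]
  cases n with
  | zero =>
    intro s
    refine hS.2.1.injective (LinearMap.ext fun φ ↦ ?_)
    rw [(modExtZeroEquiv _ _).annihilator_eq, Module.mem_annihilator] at ha
    rw [map_smul, map_zero]
    exact DFunLike.congr_fun (ha φ) s
  | succ k =>
    obtain ⟨G, f, hG, hf, hker⟩ := hS
    have : Subsingleton (S →ₗ[R] K) :=
      (modExtZeroEquiv _ _).toEquiv.subsingleton_congr.mp (hExt 0 k.succ_pos)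
    have hdual := hG.isDualSequence hf
    let e : (G →ₗ[R] K) ≃ₗ[R] dualRestrictRange K f := LinearEquiv.ofBijective _
      ⟨(injective_iff_map_eq_zero _).mpr fun φ hφ ↦ by
        obtain ⟨ψ, rfl⟩ := (hdual.isShortExact.exact φ).mp hφ
        rw [Subsingleton.elim ψ 0, map_zero], hdual.isShortExact.surjective⟩
    refine hf.forall.mpr fun y ↦ ?_
    obtain ⟨z, hz⟩ := exists_forall_smul_eq_apply hG hf hker
      (fun i hi ↦ hExt (i + 1) (Nat.succ_lt_succ hi)) ha (evalK R K G y ∘ₗ e.symm.toLinearMap)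
    have hyz : a • y = z := hG.2.1.injective (LinearMap.ext fun φ ↦ by
      have := hz (e φ)
      rw [LinearMap.comp_apply, LinearEquiv.coe_coe, e.symm_apply_apply] at this
      rw [map_smul]
      exact this)
    rw [← map_smul, hyz]
    exact z.2

end Perfect

section Gorenstein

variable {R : Type u} [CommRing R] {K E : Type u} [AddCommGroup K] [Module R K]
  [AddCommGroup E] [Module R E] {c : Ideal R} {n : ℕ}

/-- `Ext^i(R/c, E) = 0` for `i > 0` and `Hom(R/c, E) = E[c] ≅ R/c`: on modules killed by `c`, the
functor `Hom(-, E)` is duality over `R/c`. -/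
structure IsDualizingModulo (c : Ideal R) (E : Type u) [AddCommGroup E] [Module R E] : Prop where
  subsingleton_modExt : ∀ i, Subsingleton (modExt R (i + 1) (R ⧸ c) E)
  nonempty_linearEquiv : Nonempty ((R ⧸ c) ≃ₗ[R] Submodule.torsionBySet R E c)

lemma nonempty_quotient_annihilator_linearEquiv {M : Type*} [AddCommGroup M] [Module R M] {x : M}
    (hx : Submodule.span R {x} = ⊤) : Nonempty ((R ⧸ Module.annihilator R M) ≃ₗ[R] M) := by
  have htorsion : Module.annihilator R M = Ideal.torsionOf R M x := by
    rw [← Submodule.annihilator_top, ← hx, Submodule.annihilator_span_singleton]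
    rfl
  exact ⟨Submodule.quotEquivOfEq _ _ htorsion ≪≫ₗ
    Ideal.quotTorsionOfEquivSpanSingleton R M x ≪≫ₗ LinearEquiv.ofTop _ hx⟩

lemma gKDimLE_of_gKDim_eq {M : Type u} [AddCommGroup M] [Module R M]
    (h : GKDim R K M = n) : GKDimLE R K n (ModuleCat.of R M) := by
  have hne : {m : ℕ∞ | ∃ k : ℕ, m = k ∧ GKDimLE R K k (ModuleCat.of R M)}.Nonempty := by
    by_contra! hempty
    rw [GKDim, hempty, sInf_empty] at h
    exact ENat.top_ne_natCast n h
  obtain ⟨k, hk, hle⟩ := csInf_mem hne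
  obtain rfl : n = k := by exact_mod_cast h.symm.trans hk
  exact hle

namespace IsGKGorensteinIdeal

variable (hc : IsGKGorensteinIdeal R K c) (hg : gradeI R c = n)

include hc hg

lemma gKDimLE_and_exists_span_singleton_eq_top : GKDimLE R K n (ModuleCat.of R (R ⧸ c)) ∧
    ∃ x : extM R n (R ⧸ c) K, Submodule.span R {x} = ⊤ := by
  obtain ⟨m, hm, hdim, hcyclic⟩ := hc
  rw [grAnn, Ideal.annihilator_quotient] at hm
  obtain rfl : m = n := by exact_mod_cast hm.symm.trans hg
  exact ⟨gKDimLE_of_gKDim_eq hdim, hcyclic⟩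

theorem nonempty_quotient_linearEquiv_modExt [IsNoetherianRing R] (hK : IsSemidualizing R K) :
    Nonempty ((R ⧸ c) ≃ₗ[R] modExt R n (R ⧸ c) K) := by
  obtain ⟨hdim, x, hx⟩ := hc.gKDimLE_and_exists_span_singleton_eq_top hg
  obtain ⟨e⟩ := nonempty_extM_linearEquiv (R := R) n (R ⧸ c) K
  have hann : Module.annihilator R (extM R n (R ⧸ c) K) = c := by
    rw [e.annihilator_eq]
    have hle := hdim.annihilator_modExt_le fun i hi ↦
      hK.subsingleton_modExt_of_lt_gradeI (hg ▸ Nat.cast_lt.mpr hi)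
    have hge := annihilator_le_annihilator_modExt (R := R) (A := R ⧸ c) (K := K) n
    exact (hle.antisymm hge).trans Ideal.annihilator_quotient
  obtain ⟨e'⟩ := nonempty_quotient_annihilator_linearEquiv hx
  exact ⟨Submodule.quotEquivOfEq _ _ hann.symm ≪≫ₗ e' ≪≫ₗ e⟩

theorem isDualizingModulo [IsNoetherianRing R] (hK : IsSemidualizing R K)
    (hE : ∀ i, Nonempty (modExt R (n + i) (R ⧸ c) K ≃ₗ[R] modExt R i (R ⧸ c) E)) :
    IsDualizingModulo c E where
  subsingleton_modExt i :=
    have := (hc.gKDimLE_and_exists_span_singleton_eq_top hg).1.subsingleton_modExt i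
    (hE (i + 1)).some.symm.injective.subsingleton
  nonempty_linearEquiv :=
    let ⟨e⟩ := hc.nonempty_quotient_linearEquiv_modExt hg hK
    ⟨e ≪≫ₗ (hE 0).some ≪≫ₗ modExtZeroEquiv _ E ≪≫ₗ homQuotientEquivTorsion c E⟩

end IsGKGorensteinIdeal

end Gorenstein

section Linkage

variable {R : Type u} [CommRing R] {E : Type u} [AddCommGroup E] [Module R E]

lemma subsingleton_modExt_of_finite_projective (S : Type u) [CommRing S] [Algebra R S]
    (F : Type u) [AddCommGroup F] [Module R F] [Module S F] [IsScalarTower R S F]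
    [Module.Finite S F] [Module.Projective S F] (i : ℕ) [Subsingleton (modExt R i S E)] :
    Subsingleton (modExt R i F E) := by
  obtain ⟨m, f, g, -, -, hfg⟩ := Module.Finite.exists_comp_eq_id_of_projective S F
  refine (Module.annihilator_eq_top_iff (R := R)).mp ((Ideal.eq_top_iff_one _).mpr ?_)
  refine mem_annihilator_modExt_of_sum_comp_eq
    (fun j ↦ (LinearMap.proj j ∘ₗ g).restrictScalars R)
    (fun j ↦ (f ∘ₗ LinearMap.single S (fun _ ↦ S) j).restrictScalars R)
    (LinearMap.ext fun x ↦ ?_) i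
  simp only [LinearMap.sum_apply, LinearMap.comp_apply, LinearMap.restrictScalars_apply,
    ← map_sum, one_smul, LinearMap.id_apply]
  exact (congrArg f (Finset.univ_sum_single (g x))).trans (LinearMap.congr_fun hfg x)

variable {c : Ideal R} {M N P Q : Type u} [AddCommGroup M] [Module R M] [Module (R ⧸ c) M]
  [IsScalarTower R (R ⧸ c) M] [AddCommGroup P] [Module R P] [Module (R ⧸ c) P]
  [IsScalarTower R (R ⧸ c) P]

/-- `Hom_{R/c}(X, R/c) ≅ Hom_R(X, E)`, given `R/c ≅ E[c]`. -/
noncomputable def dualEquivHom (e : (R ⧸ c) ≃ₗ[R] Submodule.torsionBySet R E c) (X : Type*)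
    [AddCommGroup X] [Module R X] [Module (R ⧸ c) X] [IsScalarTower R (R ⧸ c) X] :
    Module.Dual (R ⧸ c) X ≃ₗ[R] (X →ₗ[R] E) :=
  (LinearMap.extendScalarsOfSurjectiveEquiv Ideal.Quotient.mk_surjective).symm ≪≫ₗ
    e.congrRight ≪≫ₗ LinearEquiv.ofBijective
      (LinearMap.llcomp R X _ _ (Submodule.torsionBySet R E c).subtype)
      ⟨fun _ _ h ↦ LinearMap.ext fun x ↦ Subtype.ext (LinearMap.congr_fun h x),
        fun f ↦ ⟨f.codRestrict _ fun x ↦ (Submodule.mem_torsionBySet_iff _ _).mpr fun a ↦ by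
          rw [← map_smul, ← algebraMap_smul (R ⧸ c), Ideal.Quotient.algebraMap_eq,
            Ideal.Quotient.eq_zero_iff_mem.mpr a.2, zero_smul, map_zero], rfl⟩⟩

lemma dualEquivHom_apply (e : (R ⧸ c) ≃ₗ[R] Submodule.torsionBySet R E c)
    {X : Type*} [AddCommGroup X] [Module R X] [Module (R ⧸ c) X] [IsScalarTower R (R ⧸ c) X]
    (f : Module.Dual (R ⧸ c) X) (x : X) : dualEquivHom e X f x = e (f x) :=
  rfl

lemma evalK_surjective_of_isReflexive (e : (R ⧸ c) ≃ₗ[R] Submodule.torsionBySet R E c)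
    [Module.IsReflexive (R ⧸ c) P] : Function.Surjective (evalK R E P) := by
  intro Φ
  let e' := dualEquivHom e (Module.Dual (R ⧸ c) P)
  obtain ⟨p, hp⟩ := (Module.bijective_dual_eval (R ⧸ c) P).2
    (e'.symm (Φ ∘ₗ (dualEquivHom e P).toLinearMap))
  refine ⟨p, LinearMap.ext fun g ↦ ?_⟩
  obtain ⟨f, rfl⟩ := (dualEquivHom e P).surjective g
  calc
    dualEquivHom e P f p = e (Module.Dual.eval (R ⧸ c) P p f) := dualEquivHom_apply e f p
    _ = e' (Module.Dual.eval (R ⧸ c) P p) f := (dualEquivHom_apply e _ f).symm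
    _ = Φ (dualEquivHom e P f) := by rw [hp, e'.apply_symm_apply]; rfl

variable [Module.Finite (R ⧸ c) P] [Module.Projective (R ⧸ c) P] [AddCommGroup N] [Module R N]
  [Module (R ⧸ c) N] [IsScalarTower R (R ⧸ c) N] [AddCommGroup Q] [Module (R ⧸ c) Q]

theorem IsDualizingModulo.exists_isDualSequence (hE : IsDualizingModulo c E) {d : Q →ₗ[R ⧸ c] P}
    {ε : P →ₗ[R ⧸ c] M} (hd : Function.Exact d ε) (hε : Function.Surjective ε)
    (e : LinearMap.range d.dualMap ≃ₗ[R ⧸ c] N) :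
    ∃ π : (P →ₗ[R] E) →ₗ[R] N, IsDualSequence (ε.restrictScalars R) π := by
  obtain ⟨t⟩ := hE.nonempty_linearEquiv
  let δ : Module.Dual (R ⧸ c) P →ₗ[R ⧸ c] N := e.toLinearMap ∘ₗ d.dualMap.rangeRestrict
  have hδ : Function.Exact ε.dualMap δ := fun f ↦ by
    refine Iff.trans ?_ (LinearMap.exact_lcomp_of_exact_of_surjective (R ⧸ c) hd hε f)
    exact e.map_eq_zero_iff.trans Subtype.ext_iff
  refine ⟨δ.restrictScalars R ∘ₗ (dualEquivHom t P).symm.toLinearMap, hε,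
    ⟨LinearMap.lcomp_injective_of_surjective _ hε, ?_, ?_⟩, fun i ↦ ?_,
    evalK_surjective_of_isReflexive t⟩
  · refine (Function.Exact.iff_of_ladder_linearEquiv (e₁ := dualEquivHom t M)
      (e₂ := dualEquivHom t P) (e₃ := .refl R N) (f₁₂ := ε.dualMap.restrictScalars R)
      (f₂₃ := δ.restrictScalars R) rfl ?_).mpr hδ
    exact LinearMap.ext fun f ↦ congrArg δ ((dualEquivHom t P).symm_apply_apply f)
  · exact (e.surjective.comp d.dualMap.surjective_rangeRestrict).comp
      (dualEquivHom t P).symm.surjective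
  · have := hE.subsingleton_modExt i
    have := subsingleton_modExt_of_finite_projective (R := R) (E := E) (R ⧸ c)
      (Module.Dual (R ⧸ c) P) (i + 1)
    exact (modExtCongr (dualEquivHom t P) E (i + 1)).injective.subsingleton

end Linkage

section LinkedBy

variable {R : Type u} [CommRing R] {E M N : Type u} [AddCommGroup E] [Module R E]
  [AddCommGroup M] [Module R M] [AddCommGroup N] [Module R N] {c : Ideal R}

lemma LinkedBy.symm (h : LinkedBy R c M N) : LinkedBy R c N M :=
  let ⟨hM, hN, F, G, hF, hG⟩ := h
  ⟨hN, hM, G, F, hG, hF⟩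

lemma LinkedBy.isTorsionBySet_of_le (h : LinkedBy R c M N) {I : Ideal R} (hI : I ≤ c) :
    Module.IsTorsionBySet R M I :=
  let ⟨hM, _⟩ := h
  Module.isTorsionBySet_of_subset hI hM

theorem LinkedBy.exists_isDualSequence (h : LinkedBy R c M N) (hE : IsDualizingModulo c E) :
    ∃ (P : ModuleCat.{u} R) (ε : P →ₗ[R] M) (π : (P →ₗ[R] E) →ₗ[R] N), IsDualSequence ε π := by
  obtain ⟨hM, hN, F, -, ⟨e⟩, -⟩ := h
  let := hM.module
  let := hN.module
  have : IsScalarTower R (R ⧸ c) M := hM.isScalarTower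
  have : IsScalarTower R (R ⧸ c) N := hN.isScalarTower
  let : Module R (F.P 0) := Module.compHom _ (algebraMap R (R ⧸ c))
  have : IsScalarTower R (R ⧸ c) (F.P 0) := .of_compHom R (R ⧸ c) (F.P 0)
  have := F.projective 0
  have := F.finite 0
  obtain ⟨π, hπ⟩ := hE.exists_isDualSequence (LinearMap.exact_iff.mpr F.exact0.symm) F.surj e
  exact ⟨ModuleCat.of R (F.P 0), F.ε.restrictScalars R, π, hπ⟩

theorem IsDualSequence.nonempty_modExt_linearEquiv {P P' N' : Type u} [AddCommGroup P] [Module R P]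
    [AddCommGroup P'] [Module R P'] [AddCommGroup N'] [Module R N'] {ε : P →ₗ[R] M}
    {π : (P →ₗ[R] E) →ₗ[R] N} {ε' : P' →ₗ[R] M} {π' : (P' →ₗ[R] E) →ₗ[R] N'}
    (h : IsDualSequence ε π) (h' : IsDualSequence ε' π') (i : ℕ) :
    Nonempty (modExt R (i + 1) N E ≃ₗ[R] modExt R (i + 1) N' E) := by
  cases i with
  | zero => exact ⟨h.modExtOneEquiv.symm ≪≫ₗ h'.modExtOneEquiv⟩
  | succ i => exact ⟨(h.modExtShift i).symm ≪≫ₗ h'.modExtShift i⟩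

theorem stmt18_general [IsNoetherianRing R] {K : Type u} [AddCommGroup K] [Module R K]
    (hK : IsSemidualizing R K) {c₁ c₂ : Ideal R} (hc₁ : IsGKGorensteinIdeal R K c₁)
    (hc₂ : IsGKGorensteinIdeal R K c₂) {M₁ M M₂ : Type u} [AddCommGroup M₁] [Module R M₁]
    [AddCommGroup M] [Module R M] [AddCommGroup M₂] [Module R M₂] (l₁ : LinkedBy R c₁ M₁ M)
    (l₂ : LinkedBy R c₂ M M₂) {n : ℕ} (g₁ : gradeI R c₁ = n) (g₂ : gradeI R c₂ = n) {i : ℕ}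
    (hi : n < i) : Nonempty (extM R i M₁ K ≃ₗ[R] extM R i M₂ K) := by
  obtain ⟨E, hshift⟩ := exists_modExt_shift c₁ c₂ n K
    (fun j hj ↦ hK.subsingleton_modExt_of_lt_gradeI (g₁ ▸ Nat.cast_lt.mpr hj))
    (fun j hj ↦ hK.subsingleton_modExt_of_lt_gradeI (g₂ ▸ Nat.cast_lt.mpr hj))
  have hE₁ : IsDualizingModulo c₁ E := hc₁.isDualizingModulo g₁ hK
    (hshift _ (isTorsionBySet_quotient_of_le Ideal.mul_le_left))
  have hE₂ : IsDualizingModulo c₂ E := hc₂.isDualizingModulo g₂ hK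
    (hshift _ (isTorsionBySet_quotient_of_le Ideal.mul_le_right))
  obtain ⟨_, _, _, hseq₁⟩ := l₁.symm.exists_isDualSequence hE₁
  obtain ⟨_, _, _, hseq₂⟩ := l₂.exists_isDualSequence hE₂
  obtain ⟨k, rfl⟩ := Nat.exists_eq_add_of_lt hi
  obtain ⟨e⟩ := hseq₁.nonempty_modExt_linearEquiv hseq₂ k
  obtain ⟨e₁⟩ := hshift M₁ (l₁.isTorsionBySet_of_le Ideal.mul_le_left) (k + 1)
  obtain ⟨e₂⟩ := hshift M₂ (l₂.symm.isTorsionBySet_of_le Ideal.mul_le_right) (k + 1)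
  obtain ⟨b₁⟩ := nonempty_extM_linearEquiv (R := R) (n + (k + 1)) M₁ K
  obtain ⟨b₂⟩ := nonempty_extM_linearEquiv (R := R) (n + (k + 1)) M₂ K
  exact ⟨b₁ ≪≫ₗ e₁ ≪≫ₗ e ≪≫ₗ e₂.symm ≪≫ₗ b₂.symm⟩

end LinkedBy

section Statements

variable (R : Type u) [CommRing R] [IsNoetherianRing R]

theorem stmt18 [IsLocalRing R] (K : Type u) [AddCommGroup K] [Module R K]
    (hK : IsSemidualizing R K)
    (c₁ c₂ : Ideal R) (hc₁ : IsGKGorensteinIdeal R K c₁) (hc₂ : IsGKGorensteinIdeal R K c₂)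
    (M₁ M M₂ : Type u) [AddCommGroup M₁] [Module R M₁] [Module.Finite R M₁]
    [AddCommGroup M] [Module R M] [Module.Finite R M]
    [AddCommGroup M₂] [Module R M₂] [Module.Finite R M₂]
    (l₁ : LinkedBy R c₁ M₁ M) (l₂ : LinkedBy R c₂ M M₂)
    (n : ℕ) (g₁ : gradeI R c₁ = (n : ℕ∞)) (g₂ : gradeI R c₂ = (n : ℕ∞)) :
    ∀ i : ℕ, n < i → Nonempty (extM R i M₁ K ≃ₗ[R] extM R i M₂ K) :=
  fun _ hi ↦ stmt18_general hK hc₁ hc₂ l₁ l₂ g₁ g₂ hi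

end Statements
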